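/- arXiv:2001.10016 — 3 statements merged into one kernel-verified Lean document; each statement's English description precedes it below -/
import Mathlib

section
/- Let θ_j ∈ (0,1/2) for j ≥ 0 and let E ⊆ ℝ^d be the associated tensorized Cantor set. Then the Hausdorff dimension of E equals d if and only if Θ_k^{1/k} → 1/2 as k → ∞. -/
open MeasureTheory Filter
open scoped ENNReal

/-- `Θ_k = θ_0 θ_1 ⋯ θ_{k-1}`. -/
noncomputable def Theta (θ : ℕ → ℝ) (k : ℕ) : ℝ := ∏ j ∈ Finset.range k, θ j

/-- Signs `±1` indexed by booleans. -/
def sgn (b : Bool) : ℝ := if b then 1 else -1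

/-- Midpoint `m_σ = ∑_{j<k} σ_j (1-θ_j) Θ_j / 2` associated to a sign pattern `σ ∈ {−1,1}^k`. -/
noncomputable def cmid (θ : ℕ → ℝ) {k : ℕ} (σ : Fin k → Bool) : ℝ :=
  ∑ j : Fin k, sgn (σ j) * (1 - θ (j : ℕ)) * Theta θ (j : ℕ) / 2

/-- The white interval of generation `k`: closed interval of length `Θ_k` centered at `m_σ`. -/
noncomputable def whiteInterval (θ : ℕ → ℝ) {k : ℕ} (σ : Fin k → Bool) : Set ℝ :=
  Set.Icc (cmid θ σ - Theta θ k / 2) (cmid θ σ + Theta θ k / 2)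

/-- The Cantor set with dissection ratios `θ_j`. -/
noncomputable def cantor1 (θ : ℕ → ℝ) : Set ℝ :=
  ⋂ k : ℕ, ⋃ σ : Fin k → Bool, whiteInterval θ σ

/-- The tensorized Cantor set
`E = {x ∈ [−1/2,1/2]^d : x_i ∈ E^{(1)} for some i} ⊆ ℝ^d`. -/
noncomputable def tensorCantor (d : ℕ) (θ : ℕ → ℝ) : Set (EuclideanSpace ℝ (Fin d)) :=
  {x | (∀ i, x i ∈ Set.Icc (-(1 : ℝ) / 2) (1 / 2)) ∧ ∃ i, x i ∈ cantor1 θ}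

open scoped NNReal Topology

/-!
`E` is the union of the slabs on which one given coordinate lies in `E^{(1)}`, so its dimension is
the largest of theirs. As `Θ_k ≤ 2^{-k}`, the condition `Θ_k^{1/k} → 1/2` says that for each
`α < 1` eventually `2^{-k} < Θ_k^α`.

If it fails for some `α < 1`, then at infinitely many scales `Θ_k` the Cantor set is covered by
`2^k ≤ Θ_k^{-α}` intervals and a slab by `O(Θ_k^{-(d-1+α)})` cubes, so `dim E ≤ d - 1 + α < d`.

If it holds, send `y ∈ [0,1)` to the point of `E^{(1)}` whose address is the binary expansion of
`y`. If `|y - y'|` is at least `3 · 2^{-k}`, the images are at least `Θ_k` apart, since they are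
separated by a white interval of generation `k`. Hence the inverse of this map is `α`-Hölder for
every `α < 1`, and applying it in each coordinate shows `dim E ≥ α d`, for `(E^{(1)})^d ⊆ E`.
-/

section Hausdorff

variable {X Y : Type*}

lemma dimH_le_of_frequently_isCover [EMetricSpace X] {β : Type*} {l : Filter β} {s : Set X}
    {ε : β → ℝ≥0} {N : β → Finset X} {t C : ℝ≥0} (hε : Tendsto ε l (𝓝 0))
    (hcover : ∀ᶠ b in l, Metric.IsCover (ε b) s (N b : Set X))
    (hcard : ∃ᶠ b in l, (N b).card * ε b ^ (t : ℝ) ≤ C) : dimH s ≤ t := by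
  borelize X
  apply dimH_le_of_hausdorffMeasure_ne_top
  have hdiam (b : β) (x : N b) :
      Metric.ediam (Metric.closedEBall (x : X) (ε b)) ≤ (2 * ε b : ℝ≥0) := by
    simpa using Metric.ediam_closedEBall_le
  have hlim : Tendsto (fun b => ((2 * ε b : ℝ≥0) : ℝ≥0∞)) l (𝓝 0) := by
    simpa using ENNReal.tendsto_coe.2 (hε.const_mul 2)
  have hmeasure := Measure.hausdorffMeasure_le_liminf_sum t s _ hlim
    (fun b (x : N b) => Metric.closedEBall (x : X) (ε b)) (.of_forall hdiam)
    (hcover.mono fun b hb => by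
      simpa only [Set.iUnion_subtype, Finset.mem_coe] using
        Metric.isCover_iff_subset_iUnion_closedEBall.1 hb)
  refine ne_top_of_le_ne_top (ENNReal.coe_ne_top (r := 2 ^ (t : ℝ) * C))
    (hmeasure.trans (liminf_le_of_frequently_le' (hcard.mono fun b hb => ?_)))
  calc ∑ x : N b, Metric.ediam (Metric.closedEBall (x : X) (ε b)) ^ (t : ℝ)
      ≤ ∑ _x : N b, ((2 * ε b : ℝ≥0) : ℝ≥0∞) ^ (t : ℝ) :=
        Finset.sum_le_sum fun x _ => ENNReal.rpow_le_rpow (hdiam b x) t.coe_nonneg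
    _ = ((2 ^ (t : ℝ) * ((N b).card * ε b ^ (t : ℝ)) : ℝ≥0) : ℝ≥0∞) := by
        rw [Finset.sum_const, Finset.card_univ, Fintype.card_coe, nsmul_eq_mul,
          ← ENNReal.coe_rpow_of_nonneg _ t.coe_nonneg, NNReal.mul_rpow, mul_left_comm]
        norm_cast
    _ ≤ ((2 ^ (t : ℝ) * C : ℝ≥0) : ℝ≥0∞) := by gcongr

lemma dimH_le_dimH_image_div [EMetricSpace X] [EMetricSpace Y] {s : Set X} {G : X → Y}
    {α C : ℝ≥0} (hα : 0 < α)
    (hG : ∀ x ∈ s, ∀ y ∈ s, edist x y ≤ C * edist (G x) (G y) ^ (α : ℝ)) :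
    dimH s ≤ dimH (G '' s) / α := by
  rcases s.eq_empty_or_nonempty with rfl | ⟨x₀, -⟩
  · simp
  have : Nonempty X := ⟨x₀⟩
  have hinj : Set.InjOn G s := fun x hx y hy hxy =>
    edist_le_zero.1 (by simpa [hxy, hα] using hG x hx y hy)
  have hinv : Set.LeftInvOn (Function.invFunOn G s) G s := hinj.leftInvOn_invFunOn
  have hholder : HolderOnWith C α (Function.invFunOn G s) (G '' s) := by
    rintro _ ⟨x, hx, rfl⟩ _ ⟨y, hy, rfl⟩
    simpa only [hinv hx, hinv hy] using hG x hx y hy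
  simpa only [hinv.image_image] using hholder.dimH_image_le hα

end Hausdorff

section Cover

variable {ι : Type*} [Fintype ι]

lemma isCover_univ_pi {X : ι → Type*} [∀ i, PseudoEMetricSpace (X i)] {ε : ℝ≥0}
    {s N : ∀ i, Set (X i)} (h : ∀ i, Metric.IsCover ε (s i) (N i)) :
    Metric.IsCover ε (Set.univ.pi s) (Set.univ.pi N) := by
  intro x hx
  choose y hyN hxy using fun i => h i (hx i trivial)
  exact ⟨y, fun i _ => hyN i, edist_pi_le_iff.2 hxy⟩

lemma isCover_univ_pi_update [DecidableEq ι] {X : Type*} [PseudoEMetricSpace X] {ε : ℝ≥0}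
    {s t : Set X} {M N : Finset X} (hs : Metric.IsCover ε s (M : Set X))
    (ht : Metric.IsCover ε t (N : Set X)) (i : ι) :
    Metric.IsCover ε (Set.univ.pi (Function.update (fun _ => s) i t))
      (Fintype.piFinset (Function.update (fun _ => M) i N) : Set (ι → X)) := by
  rw [Fintype.coe_piFinset]
  refine isCover_univ_pi fun j => ?_
  rcases eq_or_ne j i with rfl | hj
  · simpa only [Function.update_self] using ht
  · simpa only [Function.update_of_ne hj] using hs

lemma card_piFinset_update_const [DecidableEq ι] {X : Type*} (M N : Finset X) (i : ι) :
    (Fintype.piFinset (Function.update (fun _ => M) i N)).card =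
      N.card * M.card ^ (Fintype.card ι - 1) := by
  rw [Fintype.card_piFinset, ← Finset.mul_prod_erase _ _ (Finset.mem_univ i),
    Function.update_self, Finset.prod_congr rfl fun j hj => by
      rw [Function.update_of_ne (Finset.ne_of_mem_erase hj)],
    Finset.prod_const, Finset.card_erase_of_mem (Finset.mem_univ i), Finset.card_univ]

lemma exists_finset_isCover_Icc {a b : ℝ} (hab : a ≤ b) {r : ℝ≥0} (hr : 0 < r) :
    ∃ N : Finset ℝ, Metric.IsCover r (Set.Icc a b) (N : Set ℝ) ∧
      N.card * (2 * r : ℝ) ≤ b - a + 2 * r := by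
  have hr2 : (0 : ℝ) < 2 * r := by positivity
  refine ⟨(Finset.range (⌊(b - a) / (2 * r)⌋₊ + 1)).image fun m : ℕ => a + (2 * m + 1) * r,
    fun x hx => ?_, ?_⟩
  · set m := ⌊(x - a) / (2 * r)⌋₊ with hm
    have hm_le : m * (2 * r) ≤ x - a :=
      (le_div_iff₀ hr2).1 (Nat.floor_le (div_nonneg (sub_nonneg.2 hx.1) hr2.le))
    have hm_lt : x - a < (m + 1) * (2 * r) := (div_lt_iff₀ hr2).1 (Nat.lt_floor_add_one _)
    have hm_mem : m < ⌊(b - a) / (2 * r)⌋₊ + 1 := by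
      rw [Nat.lt_succ_iff, hm]
      gcongr
      exact hx.2
    refine ⟨a + (2 * m + 1) * r,
      Finset.mem_coe.2 (Finset.mem_image_of_mem _ (Finset.mem_range.2 hm_mem)), ?_⟩
    simp only [Set.mem_ofPred_eq]
    rw [edist_le_coe, ← NNReal.coe_le_coe, coe_nndist, Real.dist_eq, abs_le]
    constructor <;> linarith
  · have hcard := (Finset.card_image_le (s := Finset.range (⌊(b - a) / (2 * r)⌋₊ + 1))
      (f := fun m : ℕ => a + (2 * m + 1) * r)).trans (Finset.card_range _).le
    refine (mul_le_mul_of_nonneg_right (Nat.cast_le.2 hcard) hr2.le).trans ?_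
    calc ((⌊(b - a) / (2 * r)⌋₊ + 1 : ℕ) : ℝ) * (2 * r)
        ≤ ((b - a) / (2 * r) + 1) * (2 * r) := by
          push_cast
          gcongr
          exact Nat.floor_le (div_nonneg (sub_nonneg.2 hab) hr2.le)
      _ = b - a + 2 * r := by field_simp

end Cover

section GrowthRate

lemma rpow_one_div_lt_rpow_one_div_iff {x y p q : ℝ} (hx : 0 ≤ x) (hy : 0 ≤ y) (hp : 0 < p)
    (hq : 0 < q) : x ^ (1 / p) < y ^ (1 / q) ↔ x ^ q < y ^ p := by
  rw [← Real.rpow_lt_rpow_iff (by positivity) (by positivity) (mul_pos hp hq),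
    ← Real.rpow_mul hx, ← Real.rpow_mul hy]
  congr! 2 <;> field_simp

lemma tendsto_rpow_one_div_iff {u : ℕ → ℝ} {b : ℝ} (hb₀ : 0 < b) (hb₁ : b < 1)
    (hu : ∀ k, 0 ≤ u k) (hub : ∀ k, u k ≤ b ^ k) :
    Tendsto (fun k : ℕ => u k ^ ((1 : ℝ) / k)) atTop (𝓝 b) ↔
      ∀ α ∈ Set.Ioo (0 : ℝ) 1, ∀ᶠ k : ℕ in atTop, b ^ k < u k ^ α := by
  have key {α : ℝ} (hα : 0 < α) : (∀ᶠ k : ℕ in atTop, b ^ (1 / α) < u k ^ ((1 : ℝ) / k)) ↔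
      ∀ᶠ k : ℕ in atTop, b ^ k < u k ^ α :=
    eventually_congr ((eventually_gt_atTop 0).mono fun k hk => by
      rw [rpow_one_div_lt_rpow_one_div_iff hb₀.le (hu k) hα (Nat.cast_pos.2 hk),
        Real.rpow_natCast])
  have upper : ∀ᶠ k : ℕ in atTop, u k ^ ((1 : ℝ) / k) ≤ b := by
    filter_upwards [eventually_ne_atTop 0] with k hk
    calc u k ^ ((1 : ℝ) / k) ≤ (b ^ k) ^ ((1 : ℝ) / k) := by
          gcongr
          exacts [hu k, hub k]
      _ = b := by rw [one_div, Real.pow_rpow_inv_natCast hb₀.le hk]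
  constructor
  · rintro h α ⟨hα₀, hα₁⟩
    refine (key hα₀).1 (h.eventually_const_lt ?_)
    exact Real.rpow_lt_self_of_lt_one hb₀ hb₁ ((one_lt_div hα₀).2 hα₁)
  · refine fun h => tendsto_order.2
      ⟨fun c hc => ?_, fun c hc => upper.mono fun k hk => hk.trans_lt hc⟩
    have hcont : Tendsto (fun x : ℝ => b ^ x) (𝓝[>] 1) (𝓝 b) := by
      simpa using ((Real.continuous_const_rpow hb₀.ne').tendsto 1).mono_left nhdsWithin_le_nhds
    obtain ⟨x, hcx, hx⟩ := ((hcont.eventually_const_lt hc).and self_mem_nhdsWithin).exists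
    have hx₀ : 0 < x := one_pos.trans hx
    have hx' := (key (one_div_pos.2 hx₀)).2
      (h (1 / x) ⟨one_div_pos.2 hx₀, (div_lt_one hx₀).2 hx⟩)
    rw [one_div_one_div] at hx'
    exact hx'.mono fun k hk => hcx.trans hk

end GrowthRate

section BinaryDigits

lemma floor_two_mul (x : ℝ) : ⌊2 * x⌋ = ⌊x⌋ + round x := by
  have hfloor : ⌊x⌋ = ⌊2 * x⌋ / 2 := by
    simpa using (Int.cast_mul_floor_div_cancel_of_pos two_pos x).symm
  have hround := round_eq_div x
  omega

/-- The `k`-th binary digit of `y`, counted from `k = 0` for the first digit after the binary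
point. It is `true` when `2 ^ k * y` lies in the right half of its unit cell, which is expressed
through `round` because `⌊2 * x⌋ = ⌊x⌋ + round x`. -/
noncomputable def binaryDigit (y : ℝ) (k : ℕ) : Bool := decide (⌊2 ^ k * y⌋ < round (2 ^ k * y))

lemma sgn_binaryDigit (y : ℝ) (k : ℕ) :
    sgn (binaryDigit y k) = 2 * (round (2 ^ k * y) - ⌊2 ^ k * y⌋) - 1 := by
  have hround := round_eq_div (2 ^ k * y)
  have hfloor := floor_two_mul (2 ^ k * y)
  have hcases : round (2 ^ k * y) = ⌊2 ^ k * y⌋ ∨ round (2 ^ k * y) = ⌊2 ^ k * y⌋ + 1 := by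
    omega
  rcases hcases with h | h
  · simp [sgn, binaryDigit, h]
  · norm_num [sgn, binaryDigit, h]

end BinaryDigits

section CantorSet

variable {θ : ℕ → ℝ}

lemma Theta_zero (θ : ℕ → ℝ) : Theta θ 0 = 1 := Finset.prod_range_zero θ

lemma Theta_succ (θ : ℕ → ℝ) (k : ℕ) : Theta θ (k + 1) = Theta θ k * θ k :=
  Finset.prod_range_succ θ k

lemma Theta_nonneg (hθ : ∀ j, 0 ≤ θ j) (k : ℕ) : 0 ≤ Theta θ k :=
  Finset.prod_nonneg fun j _ => hθ j

lemma Theta_pos (hθ : ∀ j, 0 < θ j) (k : ℕ) : 0 < Theta θ k :=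
  Finset.prod_pos fun j _ => hθ j

lemma two_mul_Theta_succ_le (hθ : ∀ j, θ j ∈ Set.Icc 0 (1 / 2)) (k : ℕ) :
    2 * Theta θ (k + 1) ≤ Theta θ k := by
  rw [Theta_succ]
  nlinarith [Theta_nonneg (fun j => (hθ j).1) k, (hθ k).2]

lemma Theta_le_half_pow (hθ : ∀ j, θ j ∈ Set.Icc 0 (1 / 2)) (k : ℕ) :
    Theta θ k ≤ (1 / 2) ^ k := by
  simpa [Theta] using Finset.prod_le_prod (s := Finset.range k) (fun j _ => (hθ j).1)
    fun j _ => (hθ j).2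

lemma cmid_prefix_succ (θ : ℕ → ℝ) (σ : ℕ → Bool) (k : ℕ) :
    cmid θ (fun j : Fin (k + 1) => σ j) =
      cmid θ (fun j : Fin k => σ j) + sgn (σ k) * ((Theta θ k - Theta θ (k + 1)) / 2) := by
  simp only [cmid, Fin.sum_univ_castSucc, Fin.val_castSucc, Fin.val_last, Theta_succ]
  ring

/- Among the gaps of generation `j`, each of length `Θ_j - 2 Θ_{j+1}`, exactly `round (2 ^ j * y)`
lie to the left of the point with binary address `y`. -/
lemma cmid_binaryDigit (θ : ℕ → ℝ) {y : ℝ} (hy : y ∈ Set.Ico 0 1) (k : ℕ) :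
    cmid θ (fun j : Fin k => binaryDigit y j) =
      (⌊2 ^ k * y⌋ + 1 / 2) * Theta θ k +
        ∑ j ∈ Finset.range k, (Theta θ j - 2 * Theta θ (j + 1)) * round (2 ^ j * y) - 1 / 2 := by
  induction k with
  | zero => simp [cmid, Theta_zero, Int.floor_eq_zero_iff.2 hy]
  | succ k ih =>
    rw [cmid_prefix_succ, ih, sgn_binaryDigit, Finset.sum_range_succ, pow_succ', mul_assoc,
      floor_two_mul]
    push_cast
    ring

lemma Theta_mul_le_cmid_binaryDigit_sub (hθ : ∀ j, θ j ∈ Set.Icc 0 (1 / 2)) {y y' : ℝ}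
    (hy : y ∈ Set.Ico 0 1) (hy' : y' ∈ Set.Ico 0 1) (hle : y' ≤ y) (k : ℕ) :
    (2 ^ k * (y - y') - 1) * Theta θ k ≤
      cmid θ (fun j : Fin k => binaryDigit y j) - cmid θ (fun j : Fin k => binaryDigit y' j) := by
  have hgaps : ∑ j ∈ Finset.range k, (Theta θ j - 2 * Theta θ (j + 1)) * round (2 ^ j * y') ≤
      ∑ j ∈ Finset.range k, (Theta θ j - 2 * Theta θ (j + 1)) * round (2 ^ j * y) := by
    refine Finset.sum_le_sum fun j _ =>
      mul_le_mul_of_nonneg_left ?_ (sub_nonneg.2 (two_mul_Theta_succ_le hθ j))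
    rw [round_eq, round_eq]
    gcongr
  have hfloor : 2 ^ k * (y - y') - 1 ≤ (⌊2 ^ k * y⌋ : ℝ) - ⌊2 ^ k * y'⌋ := by
    linarith [Int.sub_one_lt_floor (2 ^ k * y), Int.floor_le (2 ^ k * y')]
  have hcells := mul_le_mul_of_nonneg_right hfloor (Theta_nonneg (fun j => (hθ j).1) k)
  rw [cmid_binaryDigit θ hy, cmid_binaryDigit θ hy']
  linarith

lemma whiteInterval_prefix_antitone (hθ : ∀ j, θ j ∈ Set.Icc 0 1) (σ : ℕ → Bool) :
    Antitone fun k => whiteInterval θ (fun j : Fin k => σ j) := by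
  refine antitone_nat_of_succ_le fun k => ?_
  have hle : Theta θ (k + 1) ≤ Theta θ k := by
    rw [Theta_succ]
    exact mul_le_of_le_one_right (Theta_nonneg (fun j => (hθ j).1) k) (hθ k).2
  have hsgn : |sgn (σ k)| = 1 := by cases σ k <;> simp [sgn]
  have hshift := abs_le.1 (abs_mul (sgn (σ k)) ((Theta θ k - Theta θ (k + 1)) / 2)).le
  rw [hsgn, one_mul, abs_of_nonneg (by linarith)] at hshift
  refine Set.Icc_subset_Icc ?_ ?_ <;> rw [cmid_prefix_succ] <;> linarith [hshift.1, hshift.2]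

/-- The point of the Cantor set with address `σ`: the common point of the white intervals
indexed by the finite prefixes of `σ`, encoded as the supremum of their left endpoints. -/
noncomputable def cantorPoint (θ : ℕ → ℝ) (σ : ℕ → Bool) : ℝ :=
  ⨆ k, (cmid θ (fun j : Fin k => σ j) - Theta θ k / 2)

lemma cantorPoint_mem_whiteInterval (hθ : ∀ j, θ j ∈ Set.Icc 0 1) (σ : ℕ → Bool) (k : ℕ) :
    cantorPoint θ σ ∈ whiteInterval θ (fun j : Fin k => σ j) :=
  Set.mem_iInter.1 (ciSup_mem_iInter_Icc_of_antitone_Icc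
    (whiteInterval_prefix_antitone hθ σ) fun k => by
      linarith [Theta_nonneg (fun j => (hθ j).1) k]) k

lemma cantorPoint_mem_cantor1 (hθ : ∀ j, θ j ∈ Set.Icc 0 1) (σ : ℕ → Bool) :
    cantorPoint θ σ ∈ cantor1 θ :=
  Set.mem_iInter.2 fun k => Set.mem_iUnion.2 ⟨_, cantorPoint_mem_whiteInterval hθ σ k⟩

lemma Theta_mul_le_abs_cantorPoint_sub (hθ : ∀ j, θ j ∈ Set.Icc 0 (1 / 2)) {y y' : ℝ}
    (hy : y ∈ Set.Ico 0 1) (hy' : y' ∈ Set.Ico 0 1) (k : ℕ) :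
    (2 ^ k * |y - y'| - 2) * Theta θ k ≤
      |cantorPoint θ (binaryDigit y) - cantorPoint θ (binaryDigit y')| := by
  wlog hle : y' ≤ y generalizing y y'
  · rw [abs_sub_comm y, abs_sub_comm (cantorPoint θ (binaryDigit y))]
    exact this hy' hy (le_of_not_ge hle)
  have hθ' (j : ℕ) : θ j ∈ Set.Icc 0 1 := Set.Icc_subset_Icc_right (by norm_num) (hθ j)
  have hmid := Theta_mul_le_cmid_binaryDigit_sub hθ hy hy' hle k
  have hg := (cantorPoint_mem_whiteInterval hθ' (binaryDigit y) k).1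
  have hg' := (cantorPoint_mem_whiteInterval hθ' (binaryDigit y') k).2
  rw [abs_of_nonneg (sub_nonneg.2 hle)]
  exact le_trans (by linarith) (le_abs_self _)

lemma abs_sub_le_rpow_abs_cantorPoint_sub (hθ : ∀ j, θ j ∈ Set.Icc 0 (1 / 2)) {α C : ℝ}
    (hα : 0 ≤ α) (hC : ∀ k : ℕ, (1 / 2) ^ k ≤ C * Theta θ k ^ α) {y y' : ℝ}
    (hy : y ∈ Set.Ico 0 1) (hy' : y' ∈ Set.Ico 0 1) :
    |y - y'| ≤
      6 * C * |cantorPoint θ (binaryDigit y) - cantorPoint θ (binaryDigit y')| ^ α := by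
  have hC₀ : 0 ≤ C := by simpa [Theta_zero] using zero_le_one.trans (hC 0)
  rcases eq_or_ne y y' with rfl | hne
  · rw [sub_self, abs_zero]
    positivity
  have hdist : 0 < |y - y'| / 3 := by positivity [abs_pos.2 (sub_ne_zero.2 hne)]
  have hdist₁ : |y - y'| / 3 ≤ 1 := by
    linarith [(abs_lt.2 ⟨by linarith [hy.1, hy'.2], by linarith [hy.2, hy'.1]⟩ : |y - y'| < 1)]
  obtain ⟨n, hn_lt, hn_le⟩ :=
    exists_nat_pow_near_of_lt_one hdist hdist₁ one_half_pos one_half_lt_one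
  have hscale : 3 ≤ 2 ^ (n + 1) * |y - y'| := by
    rw [one_div_pow, div_lt_div_iff₀ (by positivity) three_pos] at hn_lt
    linarith
  have hTheta := Theta_nonneg (fun j => (hθ j).1) (n + 1)
  have hsep : Theta θ (n + 1) ≤ |cantorPoint θ (binaryDigit y) - cantorPoint θ (binaryDigit y')| :=
    (le_mul_of_one_le_left hTheta (by linarith)).trans
      (Theta_mul_le_abs_cantorPoint_sub hθ hy hy' (n + 1))
  calc |y - y'| ≤ 6 * (1 / 2) ^ (n + 1) := by rw [pow_succ]; linarith
    _ ≤ 6 * (C * Theta θ (n + 1) ^ α) := by gcongr; exact hC _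
    _ ≤ 6 * (C * |cantorPoint θ (binaryDigit y) - cantorPoint θ (binaryDigit y')| ^ α) := by
      gcongr
    _ = _ := (mul_assoc _ _ _).symm

lemma exists_edist_le_mul_edist_cantorPoint_rpow (hθ : ∀ j, θ j ∈ Set.Ioc 0 (1 / 2)) {α : ℝ≥0}
    (hTheta : (fun k : ℕ => (1 / 2 : ℝ) ^ k) =O[atTop] fun k => Theta θ k ^ (α : ℝ)) :
    ∃ C : ℝ≥0, ∀ y ∈ Set.Ico (0 : ℝ) 1, ∀ y' ∈ Set.Ico (0 : ℝ) 1, edist y y' ≤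
      C * edist (cantorPoint θ (binaryDigit y)) (cantorPoint θ (binaryDigit y')) ^ (α : ℝ) := by
  have hpos (k : ℕ) : 0 < Theta θ k ^ (α : ℝ) :=
    Real.rpow_pos_of_pos (Theta_pos (fun j => (hθ j).1) k) _
  obtain ⟨C, hC⟩ := (Asymptotics.isBigO_nat_atTop_iff fun k h => absurd h (hpos k).ne').1 hTheta
  replace hC (k : ℕ) : (1 / 2 : ℝ) ^ k ≤ C * Theta θ k ^ (α : ℝ) := by
    simpa [abs_of_pos (hpos k)] using hC k
  have hC₀ : 0 ≤ C := by simpa [Theta_zero] using zero_le_one.trans (hC 0)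
  refine ⟨(6 * C).toNNReal, fun y hy y' hy' => ?_⟩
  rw [edist_dist, edist_dist, Real.dist_eq, Real.dist_eq,
    ENNReal.ofReal_rpow_of_nonneg (abs_nonneg _) α.coe_nonneg]
  rw [← ENNReal.ofReal_coe_nnreal, Real.coe_toNNReal _ (by positivity),
    ← ENNReal.ofReal_mul (by positivity)]
  exact ENNReal.ofReal_le_ofReal (abs_sub_le_rpow_abs_cantorPoint_sub
    (fun j => Set.Ioc_subset_Icc_self (hθ j)) α.coe_nonneg hC hy hy')

lemma isCover_cantor1 (θ : ℕ → ℝ) (k : ℕ) :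
    Metric.IsCover (Theta θ k / 2).toNNReal (cantor1 θ)
      (Set.range (cmid θ : (Fin k → Bool) → ℝ)) := by
  intro x hx
  obtain ⟨σ, hσ⟩ := Set.mem_iUnion.1 (Set.mem_iInter.1 hx k)
  refine ⟨cmid θ σ, Set.mem_range_self σ, ?_⟩
  have h : dist x (cmid θ σ) ≤ Theta θ k / 2 := by
    rwa [← Metric.mem_closedBall, Real.closedBall_eq_Icc]
  exact (edist_dist x _).trans_le (ENNReal.ofReal_le_ofReal h)

lemma cantor1_subset_Icc (θ : ℕ → ℝ) : cantor1 θ ⊆ Set.Icc (-1 / 2) (1 / 2) := by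
  intro x hx
  obtain ⟨σ, hσ⟩ := Set.mem_iUnion.1 (Set.mem_iInter.1 hx 0)
  simpa [whiteInterval, cmid, Theta_zero, neg_div] using hσ

section Slab

variable {ι : Type*} [DecidableEq ι]

/-- The part of the tensorized Cantor set on which the `i`-th coordinate lies in the Cantor set,
regarded as a subset of `ι → ℝ`. -/
def cantorSlab (θ : ℕ → ℝ) (i : ι) : Set (ι → ℝ) :=
  Set.univ.pi (Function.update (fun _ => Set.Icc (-1 / 2) (1 / 2)) i (cantor1 θ))

lemma mem_cantorSlab {i : ι} {x : ι → ℝ} :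
    x ∈ cantorSlab θ i ↔ (∀ j, x j ∈ Set.Icc (-1 / 2) (1 / 2)) ∧ x i ∈ cantor1 θ := by
  simp only [cantorSlab, Set.mem_univ_pi]
  refine ⟨fun h => ⟨fun j => ?_, by simpa using h i⟩, fun h j => ?_⟩
  · rcases eq_or_ne j i with rfl | hj
    · exact cantor1_subset_Icc θ (by simpa using h j)
    · simpa [hj] using h j
  · rcases eq_or_ne j i with rfl | hj
    · simpa using h.2
    · simpa [hj] using h.1 j

lemma mul_card_le_dimH_cantorSlab [Fintype ι] (hθ : ∀ j, θ j ∈ Set.Ioc 0 (1 / 2)) {α : ℝ≥0}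
    (hα : 0 < α)
    (hTheta : (fun k : ℕ => (1 / 2 : ℝ) ^ k) =O[atTop] fun k => Theta θ k ^ (α : ℝ)) (i : ι) :
    (α * Fintype.card ι : ℝ≥0∞) ≤ dimH (cantorSlab θ i) := by
  obtain ⟨C, hC⟩ := exists_edist_le_mul_edist_cantorPoint_rpow hθ hTheta
  let g (y : ℝ) : ℝ := cantorPoint θ (binaryDigit y)
  let Q : Set (ι → ℝ) := Set.univ.pi fun _ => Set.Ico 0 1
  have hholder (y : ι → ℝ) (hy : y ∈ Q) (y' : ι → ℝ) (hy' : y' ∈ Q) :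
      edist y y' ≤ C * edist (g ∘ y) (g ∘ y') ^ (α : ℝ) :=
    edist_pi_le_iff.2 fun j => (hC _ (hy j trivial) _ (hy' j trivial)).trans <| by
      gcongr
      exact edist_le_pi_edist (g ∘ y) (g ∘ y') j
  have himage : (g ∘ ·) '' Q ⊆ cantorSlab θ i := by
    have hg (y : ℝ) : g y ∈ cantor1 θ :=
      cantorPoint_mem_cantor1 (fun j => ⟨(hθ j).1.le, (hθ j).2.trans (by norm_num)⟩) _
    rintro _ ⟨y, -, rfl⟩
    exact mem_cantorSlab.2 ⟨fun j => cantor1_subset_Icc θ (hg (y j)), hg (y i)⟩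
  have hQ : dimH Q = Fintype.card ι := by
    rw [Real.dimH_of_mem_nhds (x := fun _ => 1 / 2)
      (set_pi_mem_nhds Set.finite_univ fun _ _ => Ico_mem_nhds (by norm_num) (by norm_num)),
      Module.finrank_fintype_fun_eq_card]
  have hdim := (dimH_le_dimH_image_div hα hholder).trans
    (ENNReal.div_le_div_right (dimH_mono himage) _)
  rwa [hQ, ENNReal.le_div_iff_mul_le (by simp [hα.ne']) (by simp), mul_comm] at hdim

lemma exists_finset_isCover_cantorSlab [Fintype ι] (hθ : ∀ j, θ j ∈ Set.Ioc 0 (1 / 2)) (i : ι)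
    (k : ℕ) : ∃ N : Finset (ι → ℝ),
      Metric.IsCover (Theta θ k / 2).toNNReal (cantorSlab θ i) (N : Set (ι → ℝ)) ∧
        N.card * (Theta θ k / 2).toNNReal ^ (Fintype.card ι - 1) ≤ 2 ^ k := by
  have hTheta := Theta_pos (fun j => (hθ j).1) k
  have hTheta₁ : Theta θ k ≤ 1 :=
    (Theta_le_half_pow (fun j => Set.Ioc_subset_Icc_self (hθ j)) k).trans
      (pow_le_one₀ (by norm_num) (by norm_num))
  set r : ℝ≥0 := (Theta θ k / 2).toNNReal
  have hr_coe : (r : ℝ) = Theta θ k / 2 := Real.coe_toNNReal _ (by positivity)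
  have hr_pos : 0 < r := Real.toNNReal_pos.2 (half_pos hTheta)
  let centers : Finset ℝ := Finset.univ.image (cmid θ : (Fin k → Bool) → ℝ)
  have hcenters : Metric.IsCover r (cantor1 θ) (centers : Set ℝ) := by
    simpa [centers] using isCover_cantor1 θ k
  have hcenters_card : centers.card ≤ 2 ^ k := Finset.card_image_le.trans (by simp)
  obtain ⟨grid, hgrid, hgrid_card⟩ :=
    exists_finset_isCover_Icc (a := -1 / 2) (b := 1 / 2) (by norm_num) hr_pos
  have hgrid_card_mul : grid.card * r ≤ 1 := by
    rw [← NNReal.coe_le_coe]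
    push_cast
    linarith
  refine ⟨_, isCover_univ_pi_update hgrid hcenters i, ?_⟩
  calc ((Fintype.piFinset (Function.update (fun _ => grid) i centers)).card : ℝ≥0) *
        r ^ (Fintype.card ι - 1) = centers.card * (grid.card * r) ^ (Fintype.card ι - 1) := by
        rw [card_piFinset_update_const, mul_pow]
        push_cast
        ring
    _ ≤ 2 ^ k * 1 ^ (Fintype.card ι - 1) := by
        gcongr
        exact_mod_cast hcenters_card
    _ = 2 ^ k := by rw [one_pow, mul_one]

lemma dimH_cantorSlab_le [Fintype ι] (hθ : ∀ j, θ j ∈ Set.Ioc 0 (1 / 2)) {t : ℝ≥0}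
    (ht : ∃ᶠ k : ℕ in atTop, Theta θ k ^ (t : ℝ) ≤ (1 / 2) ^ k) (i : ι) :
    dimH (cantorSlab θ i) ≤ (Fintype.card ι - 1 : ℕ) + t := by
  choose N hN hN_card using exists_finset_isCover_cantorSlab hθ i
  have hTheta : Tendsto (Theta θ) atTop (𝓝 0) :=
    squeeze_zero (Theta_nonneg fun j => (hθ j).1.le)
      (Theta_le_half_pow fun j => Set.Ioc_subset_Icc_self (hθ j))
      (tendsto_pow_atTop_nhds_zero_of_lt_one (by norm_num) (by norm_num))
  have hr : Tendsto (fun k => (Theta θ k / 2).toNNReal) atTop (𝓝 0) := by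
    simpa using tendsto_real_toNNReal (hTheta.div_const 2)
  have hcard : ∃ᶠ k in atTop, (N k).card *
      (Theta θ k / 2).toNNReal ^ (((Fintype.card ι - 1 : ℕ) + t : ℝ≥0) : ℝ) ≤ 1 := by
    refine ht.mono fun k hk => ?_
    have hTheta₀ := Theta_pos (fun j => (hθ j).1) k
    set r : ℝ≥0 := (Theta θ k / 2).toNNReal
    have hr₀ : r ≠ 0 := (Real.toNNReal_pos.2 (half_pos hTheta₀)).ne'
    have hr_rpow : r ^ (t : ℝ) ≤ (1 / 2) ^ k := by
      rw [← NNReal.coe_le_coe]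
      push_cast
      refine le_trans ?_ hk
      gcongr
      exact (Real.coe_toNNReal _ (by positivity)).trans_le (half_le_self hTheta₀.le)
    calc (N k).card * r ^ (((Fintype.card ι - 1 : ℕ) + t : ℝ≥0) : ℝ)
        = (N k).card * r ^ (Fintype.card ι - 1) * r ^ (t : ℝ) := by
          rw [NNReal.coe_add, NNReal.coe_natCast, NNReal.rpow_add hr₀, NNReal.rpow_natCast,
            mul_assoc]
      _ ≤ 2 ^ k * (1 / 2) ^ k := by
          gcongr
          exact hN_card k
      _ = 1 := by rw [← mul_pow]; norm_num
  exact_mod_cast dimH_le_of_frequently_isCover hr (.of_forall hN) hcard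

end Slab

lemma dimH_tensorCantor (d : ℕ) (θ : ℕ → ℝ) :
    dimH (tensorCantor d θ) = ⨆ i : Fin d, dimH (cantorSlab θ i) := by
  have hunion : tensorCantor d θ =
      EuclideanSpace.equiv (Fin d) ℝ ⁻¹' ⋃ i : Fin d, cantorSlab θ i := by
    ext x
    simp [tensorCantor, mem_cantorSlab]
  rw [hunion, ContinuousLinearEquiv.dimH_preimage, dimH_iUnion]

lemma mul_le_dimH_tensorCantor {d : ℕ} (hd : 0 < d) (hθ : ∀ j, θ j ∈ Set.Ioc 0 (1 / 2)) {α : ℝ≥0}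
    (hα : 0 < α)
    (hTheta : (fun k : ℕ => (1 / 2 : ℝ) ^ k) =O[atTop] fun k => Theta θ k ^ (α : ℝ)) :
    (α * d : ℝ≥0∞) ≤ dimH (tensorCantor d θ) := by
  rw [dimH_tensorCantor]
  exact le_iSup_of_le (⟨0, hd⟩ : Fin d)
    (by simpa using mul_card_le_dimH_cantorSlab hθ hα hTheta (⟨0, hd⟩ : Fin d))

lemma dimH_tensorCantor_lt {d : ℕ} (hd : 0 < d) (hθ : ∀ j, θ j ∈ Set.Ioc 0 (1 / 2)) {t : ℝ≥0}
    (ht₁ : t < 1) (ht : ∃ᶠ k : ℕ in atTop, Theta θ k ^ (t : ℝ) ≤ (1 / 2) ^ k) :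
    dimH (tensorCantor d θ) < d := by
  rw [dimH_tensorCantor]
  calc ⨆ i : Fin d, dimH (cantorSlab θ i) ≤ (d - 1 : ℕ) + t :=
        iSup_le fun i => by simpa using dimH_cantorSlab_le hθ ht i
    _ < (d - 1 : ℕ) + 1 := ENNReal.add_lt_add_left (by simp) (by exact_mod_cast ht₁)
    _ = d := by exact_mod_cast Nat.sub_add_cancel hd

end CantorSet

/-- The tensorized Cantor set has Hausdorff dimension `d` iff `Θ_k^{1/k} → 1/2`. -/
theorem dimH_tensorCantor_eq_iff (d : ℕ) (hd : 0 < d)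
    (θ : ℕ → ℝ) (hθ : ∀ j, θ j ∈ Set.Ioo (0 : ℝ) (1 / 2)) :
    dimH (tensorCantor d θ) = (d : ℝ≥0∞) ↔
      Tendsto (fun k : ℕ => Theta θ k ^ ((1 : ℝ) / k)) atTop (nhds (1 / 2)) := by
  have hθ' (j : ℕ) : θ j ∈ Set.Ioc 0 (1 / 2) := Set.Ioo_subset_Ioc_self (hθ j)
  rw [tendsto_rpow_one_div_iff one_half_pos one_half_lt_one
    (Theta_nonneg fun j => (hθ j).1.le) (Theta_le_half_pow fun j => Set.Ioo_subset_Icc_self (hθ j))]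
  refine ⟨fun hdim α hα => ?_, fun h => le_antisymm ?_ ?_⟩
  · by_contra hα_freq
    lift α to ℝ≥0 using hα.1.le
    refine (dimH_tensorCantor_lt hd hθ' (t := α) (by exact_mod_cast hα.2) ?_).ne hdim
    simpa only [not_eventually, not_lt] using hα_freq
  · exact (dimH_mono (Set.subset_univ _)).trans_eq (by simp [Real.dimH_univ_eq_finrank])
  · refine ENNReal.le_of_forall_lt_one_mul_le fun α hα => ?_
    lift α to ℝ≥0 using hα.ne_top
    rcases eq_zero_or_pos α with rfl | hα₀
    · simp
    · exact mul_le_dimH_tensorCantor hd hθ' hα₀ <| .of_norm_eventuallyLE <|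
        (h α ⟨hα₀, by exact_mod_cast hα⟩).mono fun k hk => by
          simpa using hk.le
end

section
/- Let n ≥ 1 be an integer, let J ⊆ {1,2,…,n}, and let p ∈ (1,∞). Then ∫_0^{2^{n−1}π} ∏_{j∈J} |cos(2^{−j} ξ)|^p dξ ≤ 2^{n−|J|−1} π C_p^{b(J)}, where C_p = 2 π^p ∑_{s=1}^∞ s^{−p}. -/
open scoped Real

/-- The constant `C_p = 2 π^p ∑_{s=1}^∞ s^{-p}`. -/
noncomputable def Cp (p : ℝ) : ℝ := 2 * π ^ p * ∑' s : ℕ, (1 : ℝ) / ((s : ℝ) + 1) ^ p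

/-- The number of components `b(J) = #{j ∈ J : j - 1 ∉ J}` of a finite set of integers. -/
def numComponents (J : Finset ℕ) : ℕ := (J.filter fun j => j - 1 ∉ J).card

/-!
Let `T = 2 ^ a * π` and let `{a + 1, …, b}` be a run of consecutive integers, all of whose elements
are larger than those of `J`. The factors with index in `J` are `T`-periodic, so integrating over
`[0, 2 ^ b * π]` amounts to integrating their product over `[0, T]` against the sum of the
`2 ^ (b - a)` translates by multiples of `T` of the product over the run. By the duplication
formula, that product is `2 ^ (a - b) * |sin (2 ^ (-a) * y) / sin (2 ^ (-b) * y)|`, so its `k`-th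
translate decays like the inverse of the distance from `k` to the ends of the range, and its `p`-th
powers sum to at most `C_p`. Thus each component of the index set costs a factor `C_p`, and each
integer outside of it a factor `2`, namely the number of translates of one period in the next.
Finally, the integrand is even, so half of its period carries half of the integral.
-/

open Finset MeasureTheory

section Runs

theorem exists_le_notMem_and_Ioc_subset {s : Finset ℕ} (h0 : 0 ∉ s) (n : ℕ) :
    ∃ a ≤ n, a ∉ s ∧ Ioc a n ⊆ s := by
  refine ⟨Nat.findGreatest (· ∉ s) n, Nat.findGreatest_le n,
    Nat.findGreatest_spec (P := (· ∉ s)) (Nat.zero_le n) h0, fun i hi ↦ ?_⟩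
  obtain ⟨hai, hin⟩ := mem_Ioc.1 hi
  exact not_not.1 (Nat.findGreatest_is_greatest hai hin)

@[elab_as_elim]
theorem induction_on_runs {motive : ℕ → Finset ℕ → Prop} (zero : motive 0 ∅)
    (succ : ∀ n J, J ⊆ Icc 1 n → motive n J → motive (n + 1) J)
    (union_Ioc : ∀ a b J, J ⊆ Ico 1 a → a < b → motive a J → motive b (J ∪ Ioc a b))
    {n : ℕ} {J : Finset ℕ} (hJ : J ⊆ Icc 1 n) : motive n J := by
  induction n using Nat.strong_induction_on generalizing J with
  | _ n ih =>
    by_cases hn : n ∈ J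
    · obtain ⟨a, han, haJ, hrun⟩ : ∃ a ≤ n, a ∉ J ∧ Ioc a n ⊆ J :=
        exists_le_notMem_and_Ioc_subset (by grind) n
      have hlt : a < n := han.lt_of_ne (by grind)
      have hsplit : J = J ∩ Ico 1 a ∪ Ioc a n := by grind
      rw [hsplit]
      exact union_Ioc a n _ inter_subset_right hlt (ih a hlt (by grind))
    · cases n with
      | zero =>
        obtain rfl : J = ∅ := by simpa using hJ
        exact zero
      | succ n =>
        have hJn : J ⊆ Icc 1 n := by grind
        exact succ n J hJn (ih n n.lt_succ_self hJn)

theorem numComponents_union_Ioc {J : Finset ℕ} {a b : ℕ} (hJ : J ⊆ range a) (hab : a < b) :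
    numComponents (J ∪ Ioc a b) = numComponents J + 1 := by
  have hstarts : {j ∈ J ∪ Ioc a b | j - 1 ∉ J ∪ Ioc a b} = insert (a + 1) {j ∈ J | j - 1 ∉ J} := by
    grind
  rw [numComponents, hstarts, card_insert_of_notMem (by grind), numComponents]

theorem card_union_Ioc {J : Finset ℕ} {a b : ℕ} (hJ : J ⊆ range a) :
    #(J ∪ Ioc a b) = #J + (b - a) := by
  have hdisj : Disjoint J (Ioc a b) := disjoint_left.2 (by grind)
  rw [card_union_of_disjoint hdisj, Nat.card_Ioc]

end Runs

theorem Cp_nonneg (p : ℝ) : 0 ≤ Cp p :=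
  mul_nonneg (by positivity) (tsum_nonneg fun _ ↦ by positivity)

theorem sum_range_min_reflect_le_two_mul_tsum {f : ℕ → ℝ} (hf0 : ∀ i, 0 ≤ f i) (hf : Summable f)
    (N : ℕ) : ∑ k ∈ range N, f (min k (N - 1 - k)) ≤ 2 * ∑' i, f i := by
  calc ∑ k ∈ range N, f (min k (N - 1 - k))
      ≤ ∑ k ∈ range N, (f k + f (N - 1 - k)) := sum_le_sum fun k _ ↦ by
        rcases min_choice k (N - 1 - k) with h | h <;> rw [h] <;> linarith [hf0 k, hf0 (N - 1 - k)]
    _ = 2 * ∑ k ∈ range N, f k := by rw [sum_add_distrib, sum_range_reflect, two_mul]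
    _ ≤ 2 * ∑' i, f i := by gcongr; exact hf.sum_le_tsum _ fun i _ ↦ hf0 i

theorem two_div_pi_mul_min_le_sin {x : ℝ} (hx : x ∈ Set.Icc 0 π) :
    2 / π * min x (π - x) ≤ Real.sin x := by
  rcases le_total x (π / 2) with h | h
  · rw [min_eq_left (by linarith)]
    exact Real.mul_le_sin hx.1 h
  · rw [min_eq_right (by linarith), ← Real.sin_pi_sub]
    exact Real.mul_le_sin (by linarith [hx.2]) (by linarith)

section Integral

variable {E : Type*} [NormedAddCommGroup E]

theorem intervalIntegrable_comp_add_nat_mul {f : ℝ → E} {T : ℝ} {k : ℕ}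
    (hf : IntervalIntegrable f volume (k * T) ((k + 1 : ℕ) * T)) :
    IntervalIntegrable (fun x ↦ f (x + k * T)) volume 0 T := by
  convert! hf.comp_add_right (k * T) using 1 <;> push_cast <;> ring

variable [NormedSpace ℝ E]

theorem intervalIntegral_nat_mul_eq_integral_sum {f : ℝ → E} {T : ℝ} {N : ℕ}
    (hf : ∀ k < N, IntervalIntegrable f volume (k * T) ((k + 1 : ℕ) * T)) :
    ∫ x in 0..(N * T), f x = ∫ x in 0..T, ∑ k ∈ range N, f (x + k * T) := by
  have hadj := intervalIntegral.sum_integral_adjacent_intervals (a := fun k : ℕ ↦ (k : ℝ) * T) hf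
  rw [Nat.cast_zero, zero_mul] at hadj
  rw [intervalIntegral.integral_finsetSum fun k hk ↦
    intervalIntegrable_comp_add_nat_mul (hf k (mem_range.1 hk)), ← hadj]
  refine sum_congr rfl fun k _ ↦ ?_
  rw [intervalIntegral.integral_comp_add_right]
  congr 1 <;> push_cast <;> ring

theorem intervalIntegral_mul_le_of_sum_translates_le {f g : ℝ → ℝ} {T C : ℝ} {N : ℕ} (hT : 0 ≤ T)
    (hg : IntervalIntegrable g volume 0 T) (hg0 : ∀ x ∈ Set.Icc 0 T, 0 ≤ g x) (hgT : g.Periodic T)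
    (hfg : ∀ k < N,
      IntervalIntegrable (fun x ↦ f x * g x) volume (k * T) ((k + 1 : ℕ) * T))
    (hC : ∀ x ∈ Set.Icc 0 T, ∑ k ∈ range N, f (x + k * T) ≤ C) :
    ∫ x in 0..(N * T), f x * g x ≤ C * ∫ x in 0..T, g x := by
  have hfactor (x : ℝ) : ∑ k ∈ range N, f (x + k * T) * g (x + k * T) =
      (∑ k ∈ range N, f (x + k * T)) * g x := by
    rw [sum_mul]
    exact sum_congr rfl fun k _ ↦ by rw [hgT.nat_mul k x]
  have hint : IntervalIntegrable (fun x ↦ (∑ k ∈ range N, f (x + k * T)) * g x) volume 0 T := by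
    simp only [← hfactor]
    simpa only [Finset.sum_fn] using! IntervalIntegrable.sum (range N) fun k hk ↦
      intervalIntegrable_comp_add_nat_mul (hfg k (mem_range.1 hk))
  rw [intervalIntegral_nat_mul_eq_integral_sum hfg, ← intervalIntegral.integral_const_mul]
  simp only [hfactor]
  exact intervalIntegral.integral_mono_on hT hint (hg.const_mul C) fun x hx ↦
    mul_le_mul_of_nonneg_right (hC x hx) (hg0 x hx)

theorem intervalIntegral_two_mul_of_even_of_periodic {f : ℝ → E} {T : ℝ} (hf : f.Even)
    (hfT : f.Periodic (2 * T)) (hint : IntervalIntegrable f volume 0 T) :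
    ∫ x in 0..(2 * T), f x = (2 : ℝ) • ∫ x in 0..T, f x := by
  have hneg : ∫ x in (-T)..0, f x = ∫ x in 0..T, f x := by
    simpa [hf _] using (intervalIntegral.integral_comp_neg (a := 0) (b := T) f).symm
  have hint' : IntervalIntegrable f volume (-T) 0 := by
    simpa [hf _] using (IntervalIntegrable.iff_comp_neg).1 hint.symm
  calc ∫ x in 0..(2 * T), f x = ∫ x in (-T)..T, f x := by
        convert! hfT.intervalIntegral_add_eq 0 (-T) using 2 <;> ring
    _ = (2 : ℝ) • ∫ x in 0..T, f x := by
        rw [← intervalIntegral.integral_add_adjacent_intervals hint' hint, hneg, two_smul]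

end Integral

/-- The product `∏_{j ∈ J} |cos (2 ^ (-j) * x)|`, whose `p`-th power is the integrand of the
theorem. -/
noncomputable def cosProd (J : Finset ℕ) (x : ℝ) : ℝ :=
  ∏ j ∈ J, |Real.cos ((2 : ℝ) ^ (-(j : ℤ)) * x)|

section CosProd

variable {J K : Finset ℕ} {a b m : ℕ} {p : ℝ}

theorem cosProd_nonneg (J : Finset ℕ) (x : ℝ) : 0 ≤ cosProd J x :=
  prod_nonneg fun _ _ ↦ abs_nonneg _

theorem cosProd_le_one (J : Finset ℕ) (x : ℝ) : cosProd J x ≤ 1 :=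
  prod_le_one (fun _ _ ↦ abs_nonneg _) fun _ _ ↦ Real.abs_cos_le_one _

theorem cosProd_union (h : Disjoint J K) (x : ℝ) :
    cosProd (J ∪ K) x = cosProd J x * cosProd K x :=
  prod_union h

theorem cosProd_rpow (J : Finset ℕ) (x p : ℝ) :
    cosProd J x ^ p = ∏ j ∈ J, |Real.cos ((2 : ℝ) ^ (-(j : ℤ)) * x)| ^ p :=
  (Real.finsetProd_rpow _ _ (fun _ _ ↦ abs_nonneg _) _).symm

theorem continuous_cosProd (J : Finset ℕ) : Continuous (cosProd J) := by
  unfold cosProd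
  fun_prop

theorem continuous_cosProd_rpow (J : Finset ℕ) (hp : 0 ≤ p) :
    Continuous fun x ↦ cosProd J x ^ p :=
  (continuous_cosProd J).rpow_const fun _ ↦ .inr hp

theorem cosProd_even (J : Finset ℕ) : (cosProd J).Even := fun x ↦ by
  simp [cosProd]

theorem cosProd_periodic (hJ : J ⊆ Iic a) : (cosProd J).Periodic (2 ^ a * π) := by
  refine fun x ↦ prod_congr rfl fun j hj ↦ ?_
  obtain ⟨d, rfl⟩ := Nat.exists_eq_add_of_le (mem_Iic.1 (hJ hj))
  have harg : (2 : ℝ) ^ (-(j : ℤ)) * (x + 2 ^ (j + d) * π) =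
      (2 : ℝ) ^ (-(j : ℤ)) * x + (2 ^ d : ℕ) * π := by
    rw [zpow_neg, zpow_natCast]; push_cast; field_simp; ring
  rw [harg, Real.cos_add_nat_mul_pi, abs_mul, abs_neg_one_pow, one_mul]

theorem cosProd_Ioc_mul_abs_sin (hab : a ≤ b) (x : ℝ) :
    cosProd (Ioc a b) x * (2 ^ b * |Real.sin (2 ^ (-(b : ℤ)) * x)|) =
      2 ^ a * |Real.sin (2 ^ (-(a : ℤ)) * x)| := by
  induction b, hab using Nat.le_induction with
  | base => simp [cosProd]
  | succ b hab ih =>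
    have harg : (2 : ℝ) ^ (-(b : ℤ)) * x = 2 * (2 ^ (-((b + 1 : ℕ) : ℤ)) * x) := by
      simp only [zpow_neg, zpow_natCast, pow_succ]; field_simp
    rw [← ih, cosProd, prod_Ioc_succ_top hab, ← cosProd, harg, Real.sin_two_mul, abs_mul, abs_mul,
      abs_two, pow_succ]
    ring

theorem cosProd_Ioc_mul_min_le (hab : a ≤ b) {x : ℝ} (hx : x ∈ Set.Icc 0 (2 ^ b * π)) :
    cosProd (Ioc a b) x * (2 * min x (2 ^ b * π - x)) ≤ 2 ^ a * π := by
  set θ := (2 : ℝ) ^ (-(b : ℤ)) * x with hθ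
  have hxθ : x = 2 ^ b * θ := by rw [hθ, zpow_neg, zpow_natCast]; field_simp
  have hθmem : θ ∈ Set.Icc 0 π := by
    rw [hxθ] at hx
    exact ⟨nonneg_of_mul_nonneg_right hx.1 (by positivity),
      le_of_mul_le_mul_left hx.2 (by positivity)⟩
  have hmin : 2 * min x (2 ^ b * π - x) ≤ π * (2 ^ b * |Real.sin θ|) :=
    calc 2 * min x (2 ^ b * π - x) = π * (2 ^ b * (2 / π * min θ (π - θ))) := by
          rw [hxθ, ← mul_sub, ← mul_min_of_nonneg _ _ (by positivity)]; field_simp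
      _ ≤ π * (2 ^ b * |Real.sin θ|) := by
          gcongr
          exact (two_div_pi_mul_min_le_sin hθmem).trans (le_abs_self _)
  calc cosProd (Ioc a b) x * (2 * min x (2 ^ b * π - x))
      ≤ cosProd (Ioc a b) x * (π * (2 ^ b * |Real.sin θ|)) :=
        mul_le_mul_of_nonneg_left hmin (cosProd_nonneg _ _)
    _ = π * (2 ^ a * |Real.sin (2 ^ (-(a : ℤ)) * x)|) := by
        rw [← cosProd_Ioc_mul_abs_sin hab]; ring
    _ ≤ π * (2 ^ a * 1) := by gcongr; exact Real.abs_sin_le_one _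
    _ = 2 ^ a * π := by ring

theorem cosProd_Ioc_translate_le {k : ℕ} (hk : k < 2 ^ m) {x : ℝ}
    (hx : x ∈ Set.Icc 0 (2 ^ a * π)) :
    cosProd (Ioc a (a + m)) (x + k * (2 ^ a * π)) ≤
      π / ((min k (2 ^ m - 1 - k) : ℕ) + 1) := by
  set d := min k (2 ^ m - 1 - k)
  set T := 2 ^ a * π with hT
  set y := x + k * T
  set P := cosProd (Ioc a (a + m)) y
  have hT0 : 0 < T := by positivity
  have hdk : (d : ℝ) ≤ k := by exact_mod_cast min_le_left _ _
  have hdk' : (d : ℝ) + k + 1 ≤ 2 ^ m := by exact_mod_cast (by omega : d + k + 1 ≤ 2 ^ m)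
  have hperiod : (2 : ℝ) ^ (a + m) * π = 2 ^ m * T := by rw [hT, pow_add]; ring
  have hleft : d * T ≤ y := by nlinarith [hx.1]
  have hright : d * T ≤ 2 ^ (a + m) * π - y := by rw [hperiod]; nlinarith [hx.2]
  have hdT : 0 ≤ d * T := by positivity
  have hPd : P * (2 * d) ≤ 1 := by
    refine le_of_mul_le_mul_right ?_ hT0
    calc P * (2 * d) * T = P * (2 * (d * T)) := by ring
      _ ≤ P * (2 * min y (2 ^ (a + m) * π - y)) := by
        gcongr
        · exact cosProd_nonneg _ _
        · exact le_min hleft hright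
      _ ≤ 1 * T := by
        rw [one_mul]
        exact cosProd_Ioc_mul_min_le (Nat.le_add_right a m) ⟨by linarith, by linarith⟩
  have hP1 : P ≤ 1 := cosProd_le_one _ _
  rw [le_div_iff₀ (by positivity)]
  calc P * (d + 1) = P * (2 * d) / 2 + P := by ring
    _ ≤ 1 / 2 + 1 := by gcongr
    _ ≤ π := by linarith [Real.pi_gt_three]

theorem sum_cosProd_Ioc_translate_rpow_le (hp : 1 < p) (a m : ℕ) {x : ℝ}
    (hx : x ∈ Set.Icc 0 (2 ^ a * π)) :
    ∑ k ∈ range (2 ^ m), cosProd (Ioc a (a + m)) (x + k * (2 ^ a * π)) ^ p ≤ Cp p := by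
  set f : ℕ → ℝ := fun s ↦ 1 / ((s : ℝ) + 1) ^ p with hf
  have hsum : Summable f := by
    simpa [hf] using (summable_nat_add_iff 1).2 (Real.summable_one_div_nat_rpow.2 hp)
  have hterm (k : ℕ) (hk : k ∈ range (2 ^ m)) :
      cosProd (Ioc a (a + m)) (x + k * (2 ^ a * π)) ^ p ≤ π ^ p * f (min k (2 ^ m - 1 - k)) :=
    calc cosProd (Ioc a (a + m)) (x + k * (2 ^ a * π)) ^ p
        ≤ (π / ((min k (2 ^ m - 1 - k) : ℕ) + 1)) ^ p :=
          Real.rpow_le_rpow (cosProd_nonneg _ _) (cosProd_Ioc_translate_le (mem_range.1 hk) hx)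
            (by linarith)
      _ = π ^ p * f (min k (2 ^ m - 1 - k)) := by
          rw [Real.div_rpow Real.pi_pos.le (by positivity), hf, mul_one_div]
  calc ∑ k ∈ range (2 ^ m), cosProd (Ioc a (a + m)) (x + k * (2 ^ a * π)) ^ p
      ≤ π ^ p * ∑ k ∈ range (2 ^ m), f (min k (2 ^ m - 1 - k)) := by
        rw [mul_sum]; exact sum_le_sum hterm
    _ ≤ π ^ p * (2 * ∑' s, f s) := by
        gcongr
        exact sum_range_min_reflect_le_two_mul_tsum (fun s ↦ by positivity) hsum _
    _ = Cp p := by rw [Cp]; ring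

theorem integral_cosProd_union_Ioc_rpow_le (hp : 1 < p) (hJ : J ⊆ Iic a) (hab : a ≤ b) :
    ∫ x in 0..(2 ^ b * π), cosProd (J ∪ Ioc a b) x ^ p ≤
      Cp p * ∫ x in 0..(2 ^ a * π), cosProd J x ^ p := by
  obtain ⟨m, rfl⟩ := Nat.exists_eq_add_of_le hab
  have hdisj : Disjoint (Ioc a (a + m)) J := disjoint_left.2 (by grind)
  have hmul (x : ℝ) : cosProd (J ∪ Ioc a (a + m)) x ^ p =
      cosProd (Ioc a (a + m)) x ^ p * cosProd J x ^ p := by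
    rw [union_comm, cosProd_union hdisj, Real.mul_rpow (cosProd_nonneg _ _) (cosProd_nonneg _ _)]
  have hperiod : (2 : ℝ) ^ (a + m) * π = (2 ^ m : ℕ) * (2 ^ a * π) := by push_cast; ring
  have hcont (K : Finset ℕ) := continuous_cosProd_rpow K (p := p) (by linarith)
  simp only [hmul, hperiod]
  exact intervalIntegral_mul_le_of_sum_translates_le (by positivity)
    ((hcont J).intervalIntegrable _ _) (fun x _ ↦ Real.rpow_nonneg (cosProd_nonneg J x) p)
    ((cosProd_periodic hJ).comp (· ^ p))
    (fun _ _ ↦ ((hcont _).mul (hcont J)).intervalIntegrable _ _)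
    fun x hx ↦ sum_cosProd_Ioc_translate_rpow_le hp a m hx

theorem integral_cosProd_rpow_two_pow_succ (hp : 0 ≤ p) (hJ : J ⊆ Iic a) :
    ∫ x in 0..(2 ^ (a + 1) * π), cosProd J x ^ p = 2 * ∫ x in 0..(2 ^ a * π), cosProd J x ^ p := by
  have hper : (fun x ↦ cosProd J x ^ p).Periodic (2 ^ a * π) := (cosProd_periodic hJ).comp (· ^ p)
  have hint (c d : ℝ) : IntervalIntegrable (fun x ↦ cosProd J x ^ p) volume c d :=
    (continuous_cosProd_rpow J hp).intervalIntegrable c d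
  rw [two_mul, pow_succ, mul_two, add_mul]
  simpa using hper.intervalIntegral_add_eq_add 0 (2 ^ a * π) hint

theorem integral_cosProd_rpow_le (hp : 1 < p) {n : ℕ} (hJ : J ⊆ Icc 1 n) :
    ∫ x in 0..(2 ^ n * π), cosProd J x ^ p ≤
      2 ^ ((n : ℤ) - #J) * π * Cp p ^ numComponents J := by
  refine induction_on_runs ?_ (fun n J hJ ih ↦ ?_) (fun a b J hJ hab ih ↦ ?_) hJ
  · simp [cosProd, numComponents]
  · calc ∫ x in 0..(2 ^ (n + 1) * π), cosProd J x ^ p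
        = 2 * ∫ x in 0..(2 ^ n * π), cosProd J x ^ p :=
          integral_cosProd_rpow_two_pow_succ (by linarith) (hJ.trans Icc_subset_Iic_self)
      _ ≤ 2 * (2 ^ ((n : ℤ) - #J) * π * Cp p ^ numComponents J) := by gcongr
      _ = 2 ^ (((n + 1 : ℕ) : ℤ) - #J) * π * Cp p ^ numComponents J := by
          rw [Nat.cast_succ, add_sub_right_comm, zpow_add_one₀ two_ne_zero]; ring
  · have hJa : J ⊆ range a := fun j hj ↦ mem_range.2 (mem_Ico.1 (hJ hj)).2
    have hexp : (b : ℤ) - #(J ∪ Ioc a b) = a - #J := by rw [card_union_Ioc hJa]; omega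
    calc ∫ x in 0..(2 ^ b * π), cosProd (J ∪ Ioc a b) x ^ p
        ≤ Cp p * ∫ x in 0..(2 ^ a * π), cosProd J x ^ p :=
          integral_cosProd_union_Ioc_rpow_le hp (hJ.trans (by grind)) hab.le
      _ ≤ Cp p * (2 ^ ((a : ℤ) - #J) * π * Cp p ^ numComponents J) :=
          mul_le_mul_of_nonneg_left ih (Cp_nonneg p)
      _ = 2 ^ ((b : ℤ) - #(J ∪ Ioc a b)) * π * Cp p ^ numComponents (J ∪ Ioc a b) := by
          rw [hexp, numComponents_union_Ioc hJa hab]; ring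

end CosProd

/-- Incomplete cosine expansions of `sin(x)/x`: for `n ≥ 1`, `J ⊆ {1,…,n}` and `p ∈ (1,∞)`,
`∫_0^{2^{n-1}π} ∏_{j∈J} |cos(2^{-j} ξ)|^p dξ ≤ 2^{n-|J|-1} π C_p^{b(J)}`. -/
theorem integral_prod_cos_dyadic_le (n : ℕ) (hn : 1 ≤ n) (J : Finset ℕ)
    (hJ : J ⊆ Finset.Icc 1 n) (p : ℝ) (hp : 1 < p) :
    ∫ ξ in Set.Ioc (0 : ℝ) (2 ^ (n - 1) * π),
        ∏ j ∈ J, |Real.cos ((2 : ℝ) ^ (-(j : ℤ)) * ξ)| ^ p ≤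
      (2 : ℝ) ^ ((n : ℤ) - (J.card : ℤ) - 1) * π * Cp p ^ numComponents J := by
  obtain ⟨k, rfl⟩ := Nat.exists_eq_add_of_le' hn
  have hperiod : (2 : ℝ) ^ (k + 1) * π = 2 * (2 ^ k * π) := by ring
  have hhalf := intervalIntegral_two_mul_of_even_of_periodic
    (f := fun ξ ↦ cosProd J ξ ^ p) ((cosProd_even J).left_comp (· ^ p))
    (hperiod ▸ (cosProd_periodic (hJ.trans Icc_subset_Iic_self)).comp (· ^ p))
    ((continuous_cosProd_rpow J (by linarith)).intervalIntegrable _ _)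
  have hfull := integral_cosProd_rpow_le hp hJ
  rw [hperiod, hhalf, smul_eq_mul] at hfull
  simp only [← cosProd_rpow, Nat.add_sub_cancel]
  rw [← intervalIntegral.integral_of_le (by positivity), zpow_sub_one₀ two_ne_zero]
  linarith
end

section
/- For every integer n ≥ 1 and every real ξ with |ξ| ≤ 2^{n−1} π, one has |sin(ξ)/ξ| ≤ ∏_{j=1}^n |cos(2^{−j} ξ)| ≤ (π/2) · |sin(ξ)/ξ|, where sin(ξ)/ξ is interpreted as 1 at ξ = 0. -/
open scoped Real

/-!
The duplication formula `sinc (2 * x) = cos x * sinc x`, iterated `n` times, gives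
`sinc ξ = (∏_{j=1}^n cos (2⁻ʲ ξ)) * sinc (2⁻ⁿ ξ)`. The remaining factor has absolute value at
most `1` always, and at least `2 / π` by Jordan's inequality once `|2⁻ⁿ ξ| ≤ π / 2`.
-/

section

open Real

theorem sinc_two_mul (x : ℝ) : sinc (2 * x) = cos x * sinc x := by
  obtain rfl | hx := eq_or_ne x 0
  · simp
  · rw [sinc_of_ne_zero (mul_ne_zero two_ne_zero hx), sinc_of_ne_zero hx, sin_two_mul]
    field

theorem sinc_eq_prod_cos_mul_sinc (n : ℕ) (x : ℝ) :
    sinc x = (∏ j ∈ Finset.Icc 1 n, cos ((2 : ℝ) ^ (-(j : ℤ)) * x)) *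
      sinc ((2 : ℝ) ^ (-(n : ℤ)) * x) := by
  induction n with
  | zero => simp
  | succ n ih =>
    have halve : (2 : ℝ) ^ (-(n : ℤ)) * x = 2 * ((2 : ℝ) ^ (-((n + 1 : ℕ) : ℤ)) * x) := by
      simp only [zpow_neg, zpow_natCast, pow_succ]
      field
    rw [Finset.prod_Icc_succ_top n.succ_pos, mul_assoc, ← sinc_two_mul, ← halve, ← ih]

theorem abs_sinc_eq_prod_abs_cos_mul_abs_sinc (n : ℕ) (x : ℝ) :
    |sinc x| = (∏ j ∈ Finset.Icc 1 n, |cos ((2 : ℝ) ^ (-(j : ℤ)) * x)|) *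
      |sinc ((2 : ℝ) ^ (-(n : ℤ)) * x)| := by
  rw [← Finset.abs_prod, ← abs_mul, ← sinc_eq_prod_cos_mul_sinc]

theorem two_div_pi_le_abs_sinc {x : ℝ} (hx : |x| ≤ π / 2) : 2 / π ≤ |sinc x| := by
  obtain rfl | hx₀ := eq_or_ne x 0
  · simpa using div_le_one_of_le₀ two_le_pi pi_nonneg
  · rw [sinc_of_ne_zero hx₀, abs_div, le_div_iff₀ (abs_pos.2 hx₀)]
    exact mul_abs_le_abs_sin hx

theorem abs_sinc_le_prod_abs_cos (n : ℕ) (x : ℝ) :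
    |sinc x| ≤ ∏ j ∈ Finset.Icc 1 n, |cos ((2 : ℝ) ^ (-(j : ℤ)) * x)| := by
  rw [abs_sinc_eq_prod_abs_cos_mul_abs_sinc n x]
  exact mul_le_of_le_one_right (by positivity) (abs_sinc_le_one _)

theorem prod_abs_cos_le_pi_div_two_mul_abs_sinc {n : ℕ} {x : ℝ} (hx : |x| ≤ 2 ^ n * (π / 2)) :
    ∏ j ∈ Finset.Icc 1 n, |cos ((2 : ℝ) ^ (-(j : ℤ)) * x)| ≤ π / 2 * |sinc x| := by
  have scaled : |(2 : ℝ) ^ (-(n : ℤ)) * x| ≤ π / 2 := by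
    rw [abs_mul, abs_of_pos (by positivity), zpow_neg, zpow_natCast]
    exact inv_mul_le_of_le_mul₀ (by positivity) (by positivity) hx
  set P := ∏ j ∈ Finset.Icc 1 n, |cos ((2 : ℝ) ^ (-(j : ℤ)) * x)| with hP
  calc P = π / 2 * (P * (2 / π)) := by field
    _ ≤ π / 2 * (P * |sinc ((2 : ℝ) ^ (-(n : ℤ)) * x)|) := by
      gcongr
      exact two_div_pi_le_abs_sinc scaled
    _ = π / 2 * |sinc x| := by rw [hP, ← abs_sinc_eq_prod_abs_cos_mul_abs_sinc]

end

/-- Truncated Euler product bounds for the sinc function: for every integer `n ≥ 1`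
and every real `ξ` with `|ξ| ≤ 2^{n-1} π`, one has
`|sin ξ / ξ| ≤ ∏_{j=1}^n |cos(2^{-j} ξ)| ≤ (π/2) |sin ξ / ξ|`,
where `sin ξ / ξ` is interpreted as `1` at `ξ = 0`. -/
theorem euler_product_truncated_bounds (n : ℕ) (hn : 1 ≤ n) (ξ : ℝ)
    (hξ : |ξ| ≤ 2 ^ (n - 1) * π) :
    |if ξ = 0 then (1 : ℝ) else Real.sin ξ / ξ| ≤
        ∏ j ∈ Finset.Icc 1 n, |Real.cos ((2 : ℝ) ^ (-(j : ℤ)) * ξ)| ∧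
      ∏ j ∈ Finset.Icc 1 n, |Real.cos ((2 : ℝ) ^ (-(j : ℤ)) * ξ)| ≤
        π / 2 * |if ξ = 0 then (1 : ℝ) else Real.sin ξ / ξ| := by
  rw [← Real.sinc_apply]
  have hξ' : |ξ| ≤ 2 ^ n * (π / 2) := by
    rw [← pow_sub_one_mul (Nat.one_le_iff_ne_zero.1 hn) (2 : ℝ)]
    linarith
  exact ⟨abs_sinc_le_prod_abs_cos n ξ, prod_abs_cos_le_pi_div_two_mul_abs_sinc hξ'⟩
end
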